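/- For every integer m ≥ 1, the limit ρ_ad(m) = lim_{N→∞} #{(h_1,…,h_m) ∈ {1,…,N}^m : (h_1,…,h_m) is admissible} / N^m exists and equals ∏_{p ≤ m, p prime} ρ_ad(m,p), where ρ_ad(m,p) = p^{−m} · #{(h_1,…,h_m) ∈ (ℤ/pℤ)^m : {h_1,…,h_m} ≠ ℤ/pℤ}. -/

import Mathlib

open Filter

/-- A `k`-tuple of integers is admissible if for every prime `p` its entries
do not cover all residue classes mod `p`. -/
def AdmissibleTuple {k : ℕ} (x : Fin k → ℤ) : Prop :=
  ∀ p : ℕ, p.Prime → ∃ r : ZMod p, ∀ i, (x i : ZMod p) ≠ r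

/-- The number of admissible `m`-tuples with entries in `{1, …, N}`. -/
noncomputable def admCount (m N : ℕ) : ℕ :=
  Nat.card {h : Fin m → ℤ // (∀ i, 1 ≤ h i ∧ h i ≤ (N : ℤ)) ∧ AdmissibleTuple h}

/-- `ρ_ad(m, p)`: the proportion of `m`-tuples in `(ℤ/pℤ)^m` that do not cover all
residue classes mod `p`. -/
noncomputable def rhoAdP (m p : ℕ) : ℝ :=
  (Nat.card {h : Fin m → ZMod p // ¬ Function.Surjective h} : ℝ) / (p : ℝ) ^ m

/-!
Admissibility of an `m`-tuple only involves the primes `p ≤ m`, since `m` entries cannot cover more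
than `m` residue classes. By the Chinese remainder theorem the residues of an integer modulo these
primes are jointly equidistributed, so the residues of an `m`-tuple of integers behave like
independent uniform elements of `(ℤ/pℤ)^m`, one for each `p ≤ m`.
-/

open Finset Topology

section Density

variable {κ α β : Type*} {l : Filter κ} {B : κ → Finset α}

/-- The set `A` has density `δ` with respect to the finite windows `B k` along the filter `l`: the
proportion of elements of `B k` lying in `A` tends to `δ`. For `B N = {1, …, N}` and `l = atTop`
this is the natural density. -/
def HasDensityAlong (l : Filter κ) (B : κ → Finset α) (A : Set α) (δ : ℝ) : Prop :=
  Tendsto (fun k => ((A ∩ B k).ncard : ℝ) / #(B k)) l (𝓝 δ)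

lemma ncard_inter_finset_eq_card_filter (A : Set α) [DecidablePred (· ∈ A)] (s : Finset α) :
    (A ∩ s).ncard = #{x ∈ s | x ∈ A} := by
  rw [← Set.ncard_coe_finset, coe_filter, Set.inter_comm]
  rfl

lemma ncard_preimage_inter_eq_sum_fibers (f : α → β) (T : Finset β) (s : Finset α) :
    (f ⁻¹' T ∩ s).ncard = ∑ b ∈ T, (f ⁻¹' {b} ∩ s).ncard := by
  classical
  simpa only [ncard_inter_finset_eq_card_filter, Set.mem_preimage, mem_coe,
    Set.mem_singleton_iff] using (sum_card_fiberwise_eq_card_filter s T f).symm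

lemma ncard_univ_pi {ι : Type*} [Fintype ι] {α : ι → Type*} (A : ∀ i, Set (α i)) :
    (Set.univ.pi A).ncard = ∏ i, (A i).ncard :=
  (Nat.card_congr (Equiv.Set.univPi A)).trans Nat.card_pi

namespace HasDensityAlong

lemma preimage_finset {f : α → β} {δ : β → ℝ} (T : Finset β)
    (h : ∀ b ∈ T, HasDensityAlong l B (f ⁻¹' {b}) (δ b)) :
    HasDensityAlong l B (f ⁻¹' T) (∑ b ∈ T, δ b) := by
  simpa only [HasDensityAlong, ncard_preimage_inter_eq_sum_fibers, Nat.cast_sum, sum_div] using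
    tendsto_finsetSum T h

lemma preimage_of_equidistributed {f : α → β} {δ : ℝ}
    (h : ∀ b, HasDensityAlong l B (f ⁻¹' {b}) δ) {S : Set β} (hS : S.Finite) :
    HasDensityAlong l B (f ⁻¹' S) (S.ncard * δ) := by
  lift S to Finset β using hS
  simpa using preimage_finset S fun b _ => h b

lemma pi {ι : Type*} [Fintype ι] [DecidableEq ι] {α : ι → Type*} {B : ∀ i, κ → Finset (α i)}
    {A : ∀ i, Set (α i)} {δ : ι → ℝ} (h : ∀ i, HasDensityAlong l (B i) (A i) (δ i)) :
    HasDensityAlong l (fun k => Fintype.piFinset fun i => B i k) (Set.univ.pi A) (∏ i, δ i) := by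
  have hncard (k : κ) : (Set.univ.pi A ∩ Fintype.piFinset fun i => B i k).ncard
      = ∏ i, (A i ∩ B i k).ncard := by
    rw [Fintype.coe_piFinset, ← Set.pi_inter_distrib, ncard_univ_pi]
  simpa only [HasDensityAlong, hncard, Fintype.card_piFinset, Nat.cast_prod, prod_div_distrib]
    using tendsto_finsetProd univ fun i _ => h i

end HasDensityAlong

end Density

section Residues

lemma abs_card_Ioc_filter_modEq_sub_le {a b r : ℤ} (hab : a ≤ b) (hr : 0 < r) (v : ℤ) :
    |(#{x ∈ Ioc a b | x ≡ v [ZMOD r]} : ℚ) - (b - a) / r| ≤ 1 := by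
  have hmono : ⌊(a - v : ℚ) / r⌋ ≤ ⌊(b - v : ℚ) / r⌋ := by gcongr
  have hcard : (#{x ∈ Ioc a b | x ≡ v [ZMOD r]} : ℚ) = ⌊(b - v : ℚ) / r⌋ - ⌊(a - v : ℚ) / r⌋ := by
    exact_mod_cast (Int.Ioc_filter_modEq_card a b hr v).trans (max_eq_left (sub_nonneg.mpr hmono))
  have hlength : (b - a : ℚ) / r = (b - v) / r - (a - v) / r := by ring
  rw [hcard, hlength, abs_le]
  constructor <;>
    linarith [Int.floor_le ((b - v : ℚ) / r), Int.lt_floor_add_one ((b - v : ℚ) / r),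
      Int.floor_le ((a - v : ℚ) / r), Int.lt_floor_add_one ((a - v : ℚ) / r)]

lemma hasDensityAlong_intCast_eq {M : ℕ} (hM : 0 < M) (a : ZMod M) :
    HasDensityAlong atTop (fun N : ℕ => Icc (1 : ℤ) N) {x | (x : ZMod M) = a} (1 / M) := by
  obtain ⟨v, rfl⟩ := ZMod.intCast_surjective a
  let count (N : ℕ) : ℕ := #{x ∈ Ioc (0 : ℤ) N | x ≡ v [ZMOD M]}
  have hcount (N : ℕ) : ({x : ℤ | (x : ZMod M) = v} ∩ Icc (1 : ℤ) N).ncard = count N := by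
    have hIcc : Icc (1 : ℤ) N = Ioc (0 : ℤ) N := by simp [← Icc_add_one_left_eq_Ioc]
    simp only [ZMod.intCast_eq_intCast_iff, hIcc]
    exact ncard_inter_finset_eq_card_filter {x | x ≡ v [ZMOD M]} _
  have hbound (N : ℕ) : |(count N : ℝ) - N / M| ≤ 1 := by
    simpa using (Rat.cast_le (K := ℝ)).mpr
      (abs_card_Ioc_filter_modEq_sub_le N.cast_nonneg (Int.natCast_pos.mpr hM) v)
  rw [HasDensityAlong, tendsto_iff_norm_sub_tendsto_zero]
  refine squeeze_zero' (Eventually.of_forall fun _ => norm_nonneg _) ?_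
    tendsto_one_div_atTop_nhds_zero_nat
  filter_upwards [eventually_gt_atTop 0] with N hN
  have hN' : (0 : ℝ) < N := by exact_mod_cast hN
  rw [hcount, Int.card_Icc, add_sub_cancel_right, Int.toNat_natCast, Real.norm_eq_abs]
  calc |(count N : ℝ) / N - 1 / M| = |((count N : ℝ) - N / M) / N| := by
        congr 1
        field_simp
    _ = |(count N : ℝ) - N / M| / N := by rw [abs_div, abs_of_pos hN']
    _ ≤ 1 / N := by gcongr; exact hbound N

variable {ι κ : Type*} [Fintype ι] [DecidableEq ι] [Fintype κ] {q : κ → ℕ}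

lemma hasDensityAlong_forall_intCast_eq (hq : ∀ j, 0 < q j)
    (hcop : Pairwise (Function.onFun Nat.Coprime q)) (a : ∀ j, ZMod (q j)) :
    HasDensityAlong atTop (fun N : ℕ => Icc (1 : ℤ) N) {x | ∀ j, (x : ZMod (q j)) = a j}
      (∏ j, 1 / (q j : ℝ)) := by
  let e := ZMod.prodEquivPi q hcop
  have hclass : {x : ℤ | ∀ j, (x : ZMod (q j)) = a j}
      = {x : ℤ | (x : ZMod (∏ j, q j)) = e.symm a} := by
    ext x
    rw [Set.mem_ofPred_eq, Set.mem_ofPred_eq, e.eq_symm_apply, map_intCast, funext_iff]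
    rfl
  rw [hclass, prod_div_distrib, prod_const_one, ← Nat.cast_prod]
  exact hasDensityAlong_intCast_eq (prod_pos fun j _ => hq j) (e.symm a)

lemma hasDensityAlong_forall_intCast_mem (hq : ∀ j, 0 < q j)
    (hcop : Pairwise (Function.onFun Nat.Coprime q)) (T : ∀ j, Set (ι → ZMod (q j))) :
    HasDensityAlong atTop (fun N : ℕ => Icc (1 : ι → ℤ) N)
      {x | ∀ j, (fun i => (x i : ZMod (q j))) ∈ T j}
      (∏ j, (T j).ncard / (q j : ℝ) ^ Fintype.card ι) := by
  have (j : κ) : NeZero (q j) := ⟨(hq j).ne'⟩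
  let residues (x : ι → ℤ) (j : κ) (i : ι) : ZMod (q j) := x i
  have hfiber (b : ∀ j, ι → ZMod (q j)) :
      residues ⁻¹' {b} = Set.univ.pi fun i => {x : ℤ | ∀ j, (x : ZMod (q j)) = b j i} := by
    ext x
    simp only [residues, Set.mem_preimage, Set.mem_singleton_iff, funext_iff, Set.mem_univ_pi,
      Set.mem_ofPred_eq]
    exact forall_comm
  have hequi (b : ∀ j, ι → ZMod (q j)) : HasDensityAlong atTop
      (fun N : ℕ => Icc (1 : ι → ℤ) N) (residues ⁻¹' {b}) (∏ _i : ι, ∏ j, 1 / (q j : ℝ)) :=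
    hfiber b ▸ .pi fun i => hasDensityAlong_forall_intCast_eq hq hcop fun j => b j i
  convert HasDensityAlong.preimage_of_equidistributed hequi (Set.univ.pi T).toFinite using 1
  · ext x
    simp [residues]
  · rw [ncard_univ_pi, prod_const, card_univ, Nat.cast_prod, ← prod_pow, ← prod_mul_distrib]
    simp only [div_eq_mul_inv, one_mul, inv_pow]

end Residues

lemma admissibleTuple_iff_forall_prime_le {m : ℕ} (x : Fin m → ℤ) :
    AdmissibleTuple x ↔ ∀ p ∈ {p ∈ range (m + 1) | p.Prime},
      ¬ Function.Surjective fun i => (x i : ZMod p) := by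
  simp only [AdmissibleTuple, Function.Surjective, not_forall, not_exists, mem_filter, mem_range]
  refine ⟨fun h p hp => h p hp.2, fun h p hp => ?_⟩
  rcases le_or_gt p m with hpm | hmp
  · exact h p ⟨Nat.lt_succ_of_le hpm, hp⟩
  · by_contra! hsurj
    have : NeZero p := ⟨hp.ne_zero⟩
    have hcard := Fintype.card_le_of_surjective (fun i => (x i : ZMod p)) hsurj
    rw [ZMod.card, Fintype.card_fin] at hcard
    exact hcard.not_gt hmp

lemma admCount_eq_ncard (m N : ℕ) :
    admCount m N = ({x : Fin m → ℤ | AdmissibleTuple x} ∩ Icc (1 : Fin m → ℤ) N).ncard := by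
  rw [Set.inter_comm, admCount, ← Nat.card_coe_set_eq]
  refine Nat.card_congr (Equiv.subtypeEquivRight fun x => ?_)
  simp [Pi.le_def, forall_and]

lemma tendsto_admCount_div_pow_iff {m : ℕ} {δ : ℝ} :
    Tendsto (fun N : ℕ => (admCount m N : ℝ) / (N : ℝ) ^ m) atTop (𝓝 δ) ↔
      HasDensityAlong atTop (fun N : ℕ => Icc (1 : Fin m → ℤ) N) {x | AdmissibleTuple x} δ := by
  simp only [HasDensityAlong, admCount_eq_ncard]
  simp [Pi.card_Icc]

theorem stmt_17 (m : ℕ) (hm : 1 ≤ m) :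
    Filter.Tendsto (fun N : ℕ => (admCount m N : ℝ) / (N : ℝ) ^ m) Filter.atTop
      (nhds (∏ p ∈ Finset.filter Nat.Prime (Finset.range (m + 1)), rhoAdP m p)) := by
  set P := Finset.filter Nat.Prime (Finset.range (m + 1))
  have hprime (p : P) : (p : ℕ).Prime := (mem_filter.mp p.2).2
  have hcop : Pairwise (Function.onFun Nat.Coprime fun p : P => (p : ℕ)) := fun p p' hne =>
    (Nat.coprime_primes (hprime p) (hprime p')).mpr (Subtype.coe_injective.ne hne)
  have hdensity := hasDensityAlong_forall_intCast_mem (fun p => (hprime p).pos) hcop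
    fun p => {t : Fin m → ZMod p | ¬ Function.Surjective t}
  have hadm : {x : Fin m → ℤ | ∀ p : P, ¬ Function.Surjective fun i => (x i : ZMod p)}
      = {x | AdmissibleTuple x} := by
    ext x
    exact Subtype.forall.trans (admissibleTuple_iff_forall_prime_le x).symm
  have hrho : ∏ p : P, ({t : Fin m → ZMod p | ¬ Function.Surjective t}.ncard : ℝ) / (p : ℝ) ^ m
      = ∏ p ∈ P, rhoAdP m p :=
    prod_coe_sort P (rhoAdP m)
  rw [Fintype.card_fin, hrho] at hdensity
  exact tendsto_admCount_div_pow_iff.mpr (hadm ▸ hdensity)
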